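/- Let θ ∈ (0, 1/2]. A linear map U : T[θ, S₁] → T[θ, S₁] is a linear isometry if and only if there exist a sequence (ε_i)_{i=1}^∞ with values in {−1, 1} and a permutation π of {1, 2, …, ⌊θ⁻¹⌋} such that U e_i = ε_i e_{π(i)} for 1 ≤ i ≤ ⌊θ⁻¹⌋ and U e_i = ε_i e_i for i > ⌊θ⁻¹⌋. -/

import Mathlib

open scoped BigOperators

noncomputable section

/-- Projection of a finitely supported vector onto the coordinates in `E`. -/
def tsProj (E : Finset ℕ+) (x : ℕ+ →₀ ℝ) : ℕ+ →₀ ℝ :=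
  x.filter fun i => i ∈ E

/-- The Schreier families `S_n` on the positive integers:
`S₁` consists of the sets `F` with `|F| ≤ min F` (together with `∅`), and `S_{n+1}`
consists of unions `F₁ ∪ ⋯ ∪ F_d` of nonempty members `F₁ < ⋯ < F_d` of `S_n`
with `d ≤ min F₁` (together with `∅`). -/
def Schreier : ℕ → Set (Finset ℕ+)
  | 0 => {F | F.card ≤ 1}
  | 1 => {F | ∀ a ∈ F, F.card ≤ (a : ℕ)}
  | n + 2 =>
      {F | F = ∅ ∨
        ∃ (d : ℕ) (G : Fin d → Finset ℕ+),
          0 < d ∧ (∀ i, G i ∈ Schreier (n + 1)) ∧ (∀ i, (G i).Nonempty) ∧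
          (∀ i j : Fin d, i < j → ∀ a ∈ G i, ∀ b ∈ G j, a < b) ∧
          (∀ i, ∀ a ∈ G i, d ≤ (a : ℕ)) ∧ F = Finset.univ.biUnion G}

/-- A tuple of nonempty finite sets `E 0 < E 1 < ⋯` whose set of minima belongs to `S`. -/
def TsAdmissible (S : Set (Finset ℕ+)) {d : ℕ} (E : Fin d → Finset ℕ+) : Prop :=
  (∀ i, (E i).Nonempty) ∧
  (∀ i j : Fin d, i < j → ∀ a ∈ E i, ∀ b ∈ E j, a < b) ∧
  ∃ μ : Fin d → ℕ+, (∀ i, IsLeast (↑(E i) : Set ℕ+) (μ i)) ∧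
    Finset.univ.image μ ∈ S

/-- The iterated norms `‖·‖_m` in the construction of the Tsirelson norm:
`‖x‖₀` is the supremum norm and
`‖x‖_{m+1} = max(‖x‖_m, sup{θ ∑ᵢ ‖Eᵢ x‖_m : E₁ < ⋯ < E_d, {min Eᵢ} ∈ S})`. -/
def tnormAux (θ : ℝ) (S : Set (Finset ℕ+)) : ℕ → (ℕ+ →₀ ℝ) → ℝ
  | 0, x => ⨆ i, |x i|
  | m + 1, x =>
      max (tnormAux θ S m x)
        (sSup {r : ℝ | ∃ (d : ℕ) (E : Fin d → Finset ℕ+), TsAdmissible S E ∧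
          r = θ * ∑ i, tnormAux θ S m (tsProj (E i) x)})

/-- The Tsirelson norm `‖x‖_{θ,S} = sup_m ‖x‖_m` on `c₀₀`. -/
def tnorm (θ : ℝ) (S : Set (Finset ℕ+)) (x : ℕ+ →₀ ℝ) : ℝ :=
  ⨆ m : ℕ, tnormAux θ S m x

/-- `X`, together with the sequence `e` of unit vectors, is (a realization of) the
Tsirelson space `T[θ, S_n]`: a Banach space containing `c₀₀` isometrically
(w.r.t. the Tsirelson norm) as a dense subspace, in which `(e i)` is a
(1-unconditional) basis, i.e. every `x` has a unique expansion `x = ∑ᵢ aᵢ eᵢ`. -/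
structure IsTsirelsonSpace (θ : ℝ) (n : ℕ) (X : Type*) [NormedAddCommGroup X]
    [NormedSpace ℝ X] (e : ℕ+ → X) : Prop where
  complete : CompleteSpace X
  norm_embed : ∀ a : ℕ+ →₀ ℝ, ‖a.sum fun i c => c • e i‖ = tnorm θ (Schreier n) a
  dense_embed : DenseRange fun a : ℕ+ →₀ ℝ => a.sum fun i c => c • e i
  expansion : ∀ x : X, ∃! a : ℕ+ → ℝ, HasSum (fun i => a i • e i) x

section TsHelpers

def tsL1 (x : ℕ+ →₀ ℝ) : ℝ := ∑ i ∈ x.support, |x i|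

lemma tsProj_apply (E : Finset ℕ+) (x : ℕ+ →₀ ℝ) (i : ℕ+) :
    tsProj E x i = if i ∈ E then x i else 0 := by
  simp [tsProj, Finsupp.filter_apply]

lemma abs_tsProj_le (E : Finset ℕ+) (x : ℕ+ →₀ ℝ) (i : ℕ+) :
    |tsProj E x i| ≤ |x i| := by
  rw [tsProj_apply]; split_ifs <;> simp

lemma tsL1_eq {x : ℕ+ →₀ ℝ} {F : Finset ℕ+} (h : ∀ i, i ∉ F → x i = 0) :
    tsL1 x = ∑ i ∈ F, |x i| := by
  unfold tsL1
  apply Finset.sum_subset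
  · intro i hi
    by_contra h'
    exact (Finsupp.mem_support_iff.1 hi) (h i h')
  · intro i _ hi
    simp [Finsupp.notMem_support_iff.1 hi]

lemma tsL1_nonneg (x : ℕ+ →₀ ℝ) : 0 ≤ tsL1 x :=
  Finset.sum_nonneg fun _ _ => abs_nonneg _

lemma abs_le_tsL1 (x : ℕ+ →₀ ℝ) (i : ℕ+) : |x i| ≤ tsL1 x := by
  by_cases h : i ∈ x.support
  · exact Finset.single_le_sum (f := fun i => |x i|) (fun _ _ => abs_nonneg _) h
  · rw [Finsupp.notMem_support_iff.1 h]; simpa using tsL1_nonneg x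

lemma sum_disj_le {d : ℕ} {E : Fin d → Finset ℕ+}
    (hE : ∀ i j : Fin d, i < j → ∀ a ∈ E i, ∀ b ∈ E j, a < b)
    (F : Finset ℕ+) (f : ℕ+ → ℝ) (hf : ∀ i, 0 ≤ f i) :
    ∑ l, ∑ i ∈ F, (if i ∈ E l then f i else 0) ≤ ∑ i ∈ F, f i := by
  rw [Finset.sum_comm]
  apply Finset.sum_le_sum
  intro i _
  by_cases h : ∃ l, i ∈ E l
  · obtain ⟨l, hl⟩ := h
    rw [Finset.sum_eq_single l]
    · simp [hl]
    · intro l' _ hne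
      rw [if_neg]
      intro hl'
      rcases lt_or_gt_of_ne hne with h | h
      · exact lt_irrefl _ (hE _ _ h _ hl' _ hl)
      · exact lt_irrefl _ (hE _ _ h _ hl _ hl')
    · simp
  · push Not at h
    simp [h, hf]

lemma tsL1_proj (E : Finset ℕ+) (x : ℕ+ →₀ ℝ) {F : Finset ℕ+} (h : ∀ i, i ∉ F → x i = 0) :
    tsL1 (tsProj E x) = ∑ i ∈ F, (if i ∈ E then |x i| else 0) := by
  rw [tsL1_eq (F := F)]
  · apply Finset.sum_congr rfl
    intro i _
    rw [tsProj_apply]; split_ifs <;> simp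
  · intro i hi
    rw [tsProj_apply, h i hi]; simp

lemma sum_tsL1_proj_le {d : ℕ} {E : Fin d → Finset ℕ+}
    (hE : ∀ i j : Fin d, i < j → ∀ a ∈ E i, ∀ b ∈ E j, a < b) (x : ℕ+ →₀ ℝ) :
    ∑ l, tsL1 (tsProj (E l) x) ≤ tsL1 x := by
  have := sum_disj_le hE x.support (fun i => |x i|) (fun _ => abs_nonneg _)
  calc _ = _ := Finset.sum_congr rfl fun l _ =>
        tsL1_proj (E l) x (F := x.support) (fun i hi => Finsupp.notMem_support_iff.1 hi)
    _ ≤ _ := this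

variable {θ : ℝ} {S : Set (Finset ℕ+)}

lemma aux_nonneg (m : ℕ) (x : ℕ+ →₀ ℝ) : 0 ≤ tnormAux θ S m x := by
  induction m with
  | zero => exact Real.iSup_nonneg fun _ => abs_nonneg _
  | succ m ih => exact le_max_of_le_left ih

lemma aux_zero_le {x : ℕ+ →₀ ℝ} {B : ℝ} (h : ∀ i, |x i| ≤ B) : tnormAux θ S 0 x ≤ B :=
  ciSup_le h

lemma aux_succ_le {x : ℕ+ →₀ ℝ} {B : ℝ} (m : ℕ) (h0 : tnormAux θ S m x ≤ B) (hB : 0 ≤ B)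
    (h : ∀ (d : ℕ) (E : Fin d → Finset ℕ+), TsAdmissible S E →
      θ * ∑ i, tnormAux θ S m (tsProj (E i) x) ≤ B) : tnormAux θ S (m+1) x ≤ B := by
  apply max_le h0
  apply Real.sSup_le _ hB
  rintro r ⟨d, E, hE, rfl⟩
  exact h d E hE

lemma aux_le_L1 (h0 : 0 < θ) (h1 : θ ≤ 1/2) (m : ℕ) (x : ℕ+ →₀ ℝ) :
    tnormAux θ S m x ≤ tsL1 x := by
  induction m generalizing x with
  | zero => exact aux_zero_le (abs_le_tsL1 x)
  | succ m ih =>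
    apply aux_succ_le m (ih x) (tsL1_nonneg x)
    intro d E hE
    have h2 := sum_tsL1_proj_le hE.2.1 x
    have h3 : ∑ i, tnormAux θ S m (tsProj (E i) x) ≤ ∑ l, tsL1 (tsProj (E l) x) :=
      Finset.sum_le_sum fun i _ => ih _
    have := tsL1_nonneg x
    nlinarith

lemma aux_bdd (h0 : 0 < θ) (h1 : θ ≤ 1/2) (x : ℕ+ →₀ ℝ) :
    BddAbove (Set.range fun m => tnormAux θ S m x) :=
  ⟨tsL1 x, by rintro _ ⟨m, rfl⟩; exact aux_le_L1 h0 h1 m x⟩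

lemma aux_mono_m (x : ℕ+ →₀ ℝ) : Monotone fun m => tnormAux θ S m x :=
  monotone_nat_of_le_succ fun _ => le_max_left _ _

lemma aux_le_tnorm (h0 : 0 < θ) (h1 : θ ≤ 1/2) (m : ℕ) (x : ℕ+ →₀ ℝ) :
    tnormAux θ S m x ≤ tnorm θ S x := le_ciSup (aux_bdd h0 h1 x) m

lemma abs_le_aux_zero (x : ℕ+ →₀ ℝ) (i : ℕ+) : |x i| ≤ tnormAux θ S 0 x :=
  le_ciSup (f := fun i => |x i|)
    ⟨tsL1 x, by rintro _ ⟨m, rfl⟩; exact abs_le_tsL1 x m⟩ i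

lemma abs_le_tnorm (h0 : 0 < θ) (h1 : θ ≤ 1/2) (x : ℕ+ →₀ ℝ) (i : ℕ+) :
    |x i| ≤ tnorm θ S x := (abs_le_aux_zero x i).trans (aux_le_tnorm h0 h1 0 x)

lemma tnorm_nonneg (x : ℕ+ →₀ ℝ) : 0 ≤ tnorm θ S x := Real.iSup_nonneg fun m => aux_nonneg m x

lemma le_aux_succ (h0 : 0 < θ) (h1 : θ ≤ 1/2) (m : ℕ) (x : ℕ+ →₀ ℝ) {d : ℕ}
    {E : Fin d → Finset ℕ+} (hE : TsAdmissible S E) :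
    θ * ∑ i, tnormAux θ S m (tsProj (E i) x) ≤ tnormAux θ S (m+1) x := by
  refine le_trans ?_ (le_max_right _ _)
  refine le_csSup ?_ ⟨d, E, hE, rfl⟩
  refine ⟨tsL1 x, ?_⟩
  rintro _ ⟨d, E, hE, rfl⟩
  have h2 := sum_tsL1_proj_le hE.2.1 x
  have h3 : ∑ i, tnormAux θ S m (tsProj (E i) x) ≤ ∑ l, tsL1 (tsProj (E l) x) :=
    Finset.sum_le_sum fun i _ => aux_le_L1 h0 h1 _ _
  have := tsL1_nonneg x
  nlinarith

lemma adm_le_tnorm (h0 : 0 < θ) (h1 : θ ≤ 1/2) (x : ℕ+ →₀ ℝ) {d : ℕ}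
    {E : Fin d → Finset ℕ+} (hE : TsAdmissible S E) :
    θ * ∑ i, tnorm θ S (tsProj (E i) x) ≤ tnorm θ S x := by
  have ht : ∀ y : ℕ+ →₀ ℝ, Filter.Tendsto (fun m => tnormAux θ S m y) Filter.atTop
      (nhds (tnorm θ S y)) := fun y =>
    tendsto_atTop_ciSup (aux_mono_m y) (aux_bdd h0 h1 y)
  have h2 : Filter.Tendsto (fun m => θ * ∑ i, tnormAux θ S m (tsProj (E i) x)) Filter.atTop
      (nhds (θ * ∑ i, tnorm θ S (tsProj (E i) x))) :=
    (tendsto_finsetSum _ fun i _ => ht _).const_mul θ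
  exact le_of_tendsto' h2 fun m =>
    (le_aux_succ h0 h1 m x hE).trans (aux_le_tnorm h0 h1 _ x)

lemma tnorm_le {x : ℕ+ →₀ ℝ} {B : ℝ} (h : ∀ m, tnormAux θ S m x ≤ B) : tnorm θ S x ≤ B :=
  ciSup_le h

lemma tnorm_le_L1 (h0 : 0 < θ) (h1 : θ ≤ 1/2) (x : ℕ+ →₀ ℝ) : tnorm θ S x ≤ tsL1 x :=
  tnorm_le fun m => aux_le_L1 h0 h1 m x

/-- one step of the fixed point equation -/
lemma tnorm_le_step (h0 : 0 < θ) (h1 : θ ≤ 1/2) {x : ℕ+ →₀ ℝ} {B : ℝ} (hx : ∀ i, |x i| ≤ B)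
    (h : ∀ (d : ℕ) (E : Fin d → Finset ℕ+), TsAdmissible S E →
      θ * ∑ i, tnorm θ S (tsProj (E i) x) ≤ B) : tnorm θ S x ≤ B := by
  have hB : 0 ≤ B := (abs_nonneg _).trans (hx 1)
  apply tnorm_le
  intro m
  induction m with
  | zero => exact aux_zero_le hx
  | succ m ih =>
    apply aux_succ_le m ih hB
    intro d E hE
    refine le_trans ?_ (h d E hE)
    apply mul_le_mul_of_nonneg_left _ h0.le
    exact Finset.sum_le_sum fun i _ => aux_le_tnorm h0 h1 _ _

lemma tnorm_le_supL1 (h0 : 0 < θ) (h1 : θ ≤ 1/2) {x : ℕ+ →₀ ℝ} {B : ℝ} (hx : ∀ i, |x i| ≤ B)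
    (h : θ * tsL1 x ≤ B) : tnorm θ S x ≤ B := by
  apply tnorm_le_step h0 h1 hx
  intro d E hE
  refine le_trans (mul_le_mul_of_nonneg_left ?_ h0.le) h
  exact (Finset.sum_le_sum fun i _ => tnorm_le_L1 h0 h1 _).trans (sum_tsL1_proj_le hE.2.1 x)

lemma aux_mono (h0 : 0 < θ) (h1 : θ ≤ 1/2) (m : ℕ) {x y : ℕ+ →₀ ℝ} (h : ∀ i, |x i| ≤ |y i|) :
    tnormAux θ S m x ≤ tnormAux θ S m y := by
  induction m generalizing x y with
  | zero => exact aux_zero_le fun i => (h i).trans (abs_le_aux_zero y i)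
  | succ m ih =>
    apply aux_succ_le m ((ih h).trans (aux_mono_m y (Nat.le_succ m))) (aux_nonneg _ _)
    intro d E hE
    refine le_trans ?_ (le_aux_succ h0 h1 m y hE)
    apply mul_le_mul_of_nonneg_left _ h0.le
    apply Finset.sum_le_sum
    intro l _
    apply ih
    intro i
    rw [tsProj_apply, tsProj_apply]
    split_ifs
    · exact h i
    · simp

lemma tnorm_mono (h0 : 0 < θ) (h1 : θ ≤ 1/2) {x y : ℕ+ →₀ ℝ} (h : ∀ i, |x i| ≤ |y i|) :
    tnorm θ S x ≤ tnorm θ S y :=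
  tnorm_le fun m => (aux_mono h0 h1 m h).trans (aux_le_tnorm h0 h1 m y)

/-- reduced formula -/
lemma tnorm_le_reduced (h0 : 0 < θ) (h1 : θ ≤ 1/2) {x : ℕ+ →₀ ℝ} {B : ℝ} (hx : ∀ i, |x i| ≤ B)
    (h : ∀ (d : ℕ) (E : Fin d → Finset ℕ+), TsAdmissible S E → ⌊θ⁻¹⌋₊ < d →
      θ * ∑ i, tnorm θ S (tsProj (E i) x) ≤ B) : tnorm θ S x ≤ B := by
  apply tnorm_le
  intro m
  induction m generalizing x with
  | zero => exact aux_zero_le hx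
  | succ m ih =>
    have hB : 0 ≤ B := (abs_nonneg _).trans (hx 1)
    apply aux_succ_le m (ih hx h) hB
    intro d E hE
    rcases lt_or_ge ⌊θ⁻¹⌋₊ d with hd | hd
    · refine le_trans ?_ (h d E hE hd)
      apply mul_le_mul_of_nonneg_left _ h0.le
      exact Finset.sum_le_sum fun i _ => aux_le_tnorm h0 h1 _ _
    · have h2 : ∑ i, tnormAux θ S m (tsProj (E i) x) ≤ ∑ i : Fin d, B := by
        apply Finset.sum_le_sum
        intro l _
        apply ih
        · intro i
          exact (abs_tsProj_le _ _ _).trans (hx i)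
        · intro d' E' hE' hd'
          refine le_trans ?_ (h d' E' hE' hd')
          apply mul_le_mul_of_nonneg_left _ h0.le
          apply Finset.sum_le_sum
          intro l' _
          apply tnorm_mono h0 h1
          intro i
          rw [tsProj_apply, tsProj_apply (E' l') x]
          split_ifs
          · exact abs_tsProj_le _ _ _
          · simp
      have h3 : θ * d ≤ 1 := by
        have : (d:ℝ) ≤ θ⁻¹ := (Nat.cast_le.2 hd).trans (Nat.floor_le (by positivity))
        calc θ * d ≤ θ * θ⁻¹ := by gcongr
          _ = 1 := by field_simp
      calc _ ≤ θ * ∑ i : Fin d, B := by gcongr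
        _ = (θ * d) * B := by simp; ring
        _ ≤ 1 * B := by gcongr
        _ = B := one_mul _

lemma mem_S1 {F : Finset ℕ+} : F ∈ Schreier 1 ↔ ∀ a ∈ F, F.card ≤ (a : ℕ) := by
  simp [Schreier]

lemma adm_lt {d : ℕ} {E : Fin d → Finset ℕ+} (hE : TsAdmissible (Schreier 1) E) (l : Fin d)
    {a : ℕ+} (ha : a ∈ E l) : d ≤ (a : ℕ) := by
  obtain ⟨_, h2, μ, hμ, h3⟩ := hE
  rw [mem_S1] at h3
  have hinj : Function.Injective μ := by
    intro i j hij
    by_contra hne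
    rcases lt_or_gt_of_ne hne with h | h
    · exact absurd hij (h2 _ _ h _ (hμ i).1 _ (hμ j).1).ne
    · exact absurd hij.symm (h2 _ _ h _ (hμ j).1 _ (hμ i).1).ne
  have h4 := h3 (μ l) (Finset.mem_image_of_mem _ (Finset.mem_univ l))
  rw [Finset.card_image_of_injective _ hinj, Finset.card_univ, Fintype.card_fin] at h4
  exact h4.trans (PNat.coe_le_coe _ _ |>.2 ((hμ l).2 ha))

lemma tnorm_proj_empty (h0 : 0 < θ) (h1 : θ ≤ 1/2) (x : ℕ+ →₀ ℝ) :
    tnorm θ S (tsProj ∅ x) = 0 := by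
  apply le_antisymm _ (tnorm_nonneg _)
  refine (tnorm_le_L1 h0 h1 _).trans ?_
  rw [tsL1_eq (F := ∅)]
  · simp
  · intro i _; simp [tsProj_apply]

lemma weak_adm {ι : Type*} [LinearOrder ι] (h0 : 0 < θ) (h1 : θ ≤ 1/2) (x : ℕ+ →₀ ℝ)
    (s : Finset ι) (E : ι → Finset ℕ+)
    (hE : ∀ i ∈ s, ∀ j ∈ s, i < j → ∀ a ∈ E i, ∀ b ∈ E j, a < b)
    (hc : ∀ i ∈ s, ∀ a ∈ E i, s.card ≤ (a : ℕ)) :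
    θ * ∑ i ∈ s, tnorm θ (Schreier 1) (tsProj (E i) x) ≤ tnorm θ (Schreier 1) x := by
  classical
  set t := s.filter (fun i => (E i).Nonempty) with ht
  have hst : ∑ i ∈ s, tnorm θ (Schreier 1) (tsProj (E i) x)
      = ∑ i ∈ t, tnorm θ (Schreier 1) (tsProj (E i) x) := by
    symm
    apply Finset.sum_subset (Finset.filter_subset _ _)
    intro i hi hit
    have : E i = ∅ := by
      by_contra h
      exact hit (Finset.mem_filter.2 ⟨hi, Finset.nonempty_iff_ne_empty.2 h⟩)
    rw [this, tnorm_proj_empty h0 h1]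
  let f := t.orderIsoOfFin rfl
  have hsum : ∑ i ∈ t, tnorm θ (Schreier 1) (tsProj (E i) x)
      = ∑ l : Fin t.card, tnorm θ (Schreier 1) (tsProj (E (f l)) x) := by
    rw [← Finset.sum_coe_sort t]
    exact (Equiv.sum_comp f.toEquiv (fun i : t => tnorm θ (Schreier 1) (tsProj (E i) x))).symm
  have hmem : ∀ l, (f l : ι) ∈ s ∧ (E (f l)).Nonempty := fun l => Finset.mem_filter.1 (f l).2
  rw [hst, hsum]
  apply adm_le_tnorm h0 h1
  refine ⟨fun l => (hmem l).2, ?_, fun l => (E (f l)).min' (hmem l).2, ?_, ?_⟩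
  · intro i j hij
    exact hE _ (hmem i).1 _ (hmem j).1 (f.strictMono hij)
  · intro l
    exact Finset.isLeast_min' _ _
  · rw [mem_S1]
    intro a ha
    obtain ⟨l, _, rfl⟩ := Finset.mem_image.1 ha
    have h5 := hc _ (hmem l).1 _ (Finset.min'_mem _ (hmem l).2)
    refine le_trans (Finset.card_image_le) (le_trans ?_ h5)
    simpa using Finset.card_le_card (Finset.filter_subset _ _)

lemma schreier_le (h0 : 0 < θ) (h1 : θ ≤ 1/2) (x : ℕ+ →₀ ℝ) (F : Finset ℕ+)
    (hF : ∀ a ∈ F, F.card ≤ (a : ℕ)) : θ * ∑ i ∈ F, |x i| ≤ tnorm θ (Schreier 1) x := by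
  refine le_trans ?_ (weak_adm h0 h1 x F (fun i => {i}) ?_ ?_)
  · apply mul_le_mul_of_nonneg_left _ h0.le
    apply Finset.sum_le_sum
    intro i _
    have := abs_le_tnorm (S := Schreier 1) h0 h1 (tsProj {i} x) i
    simpa [tsProj_apply] using this
  · intro i _ j _ hij a ha b hb
    simp at ha hb
    subst ha hb; exact hij
  · intro i hi a ha
    simp at ha
    subst ha; exact hF _ hi

lemma tail_lower (h0 : 0 < θ) (h1 : θ ≤ 1/2) {x y : ℕ+ →₀ ℝ} {B : ℝ}
    (hx : ∀ i, |x i| ≤ B) (hB : B < tnorm θ (Schreier 1) x) (L : ℕ+)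
    (hxL : ∀ i, L < i → x i = 0) (hyL : ∀ i, i ≤ L → y i = 0) :
    B * (1 - 1 / (⌊θ⁻¹⌋₊ + 1 : ℝ)) + θ * tnorm θ (Schreier 1) y ≤ tnorm θ (Schreier 1) (x + y) := by
  classical
  have hB0 : 0 ≤ B := (abs_nonneg _).trans (hx 1)
  by_cases hy : y = 0
  · subst hy
    have : tnorm θ (Schreier 1) (0 : ℕ+ →₀ ℝ) = 0 := by
      apply le_antisymm _ (tnorm_nonneg _)
      refine (tnorm_le_L1 h0 h1 _).trans ?_
      simp [tsL1]
    rw [this, add_zero]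
    have : 0 ≤ 1 / (⌊θ⁻¹⌋₊ + 1 : ℝ) := by positivity
    nlinarith
  obtain ⟨d, E, hE, hd, hlt⟩ : ∃ (d : ℕ) (E : Fin d → Finset ℕ+), TsAdmissible (Schreier 1) E ∧
      ⌊θ⁻¹⌋₊ < d ∧ B < θ * ∑ i, tnorm θ (Schreier 1) (tsProj (E i) x) := by
    by_contra hcon
    push Not at hcon
    exact absurd (tnorm_le_reduced h0 h1 hx hcon) (not_le.2 hB)
  have hd0 : 0 < d := by omega
  have : Nonempty (Fin d) := ⟨⟨0, hd0⟩⟩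
  set v : Fin d → ℝ := fun i => tnorm θ (Schreier 1) (tsProj (E i) x) with hv
  obtain ⟨l0, -, hl0⟩ := Finset.exists_min_image Finset.univ v Finset.univ_nonempty
  have hmin : d * v l0 ≤ ∑ i, v i := by
    have := Finset.card_nsmul_le_sum Finset.univ v (v l0) (fun i hi => hl0 i hi)
    simpa using this
  have herase : ∑ i ∈ Finset.univ.erase l0, v i = ∑ i, v i - v l0 := by
    rw [← Finset.add_sum_erase Finset.univ v (Finset.mem_univ l0)]; ring
  -- the smallest relevant coordinate
  have hsome : ∃ l, ∃ a ∈ E l, a ≤ L := by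
    by_contra hcon
    push Not at hcon
    have hz : ∀ l, v l = 0 := by
      intro l
      apply le_antisymm _ (tnorm_nonneg _)
      refine (tnorm_le_L1 h0 h1 _).trans ?_
      rw [tsL1_eq (F := ∅)]
      · simp
      · intro i _
        rw [tsProj_apply]
        split_ifs with h
        · exact hxL i (hcon l i h)
        · rfl
    simp [hz] at hlt
    linarith
  have hdL : d ≤ (L : ℕ) := by
    obtain ⟨l, a, ha, haL⟩ := hsome
    exact (adm_lt hE l ha).trans (PNat.coe_le_coe _ _ |>.2 haL)
  let s : Finset (WithTop (Fin d)) :=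
    insert ⊤ ((Finset.univ.erase l0).image (fun l : Fin d => (l : WithTop (Fin d))))
  let G : WithTop (Fin d) → Finset ℕ+ := fun l =>
    WithTop.recTopCoe (C := fun _ => Finset ℕ+) y.support (fun l => (E l).filter (· ≤ L)) l
  have hnot : (⊤ : WithTop (Fin d)) ∉
      ((Finset.univ.erase l0).image (fun l : Fin d => (l : WithTop (Fin d)))) := by
    simp
  have hcard : s.card ≤ d := by
    refine (Finset.card_insert_le _ _).trans ?_
    have h3 := Finset.card_image_le (s := Finset.univ.erase l0)
      (f := fun l : Fin d => (l : WithTop (Fin d)))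
    rw [Finset.card_erase_of_mem (Finset.mem_univ _), Finset.card_univ, Fintype.card_fin] at h3
    omega
  have hysupp : ∀ a ∈ y.support, L < a := by
    intro a ha
    by_contra h
    exact (Finsupp.mem_support_iff.1 ha) (hyL a (not_lt.1 h))
  have key := weak_adm h0 h1 (x + y) s G ?_ ?_
  · refine le_trans ?_ key
    rw [Finset.sum_insert hnot, Finset.sum_image (by intro a _ b _ h; exact WithTop.coe_injective h)]
    have e1 : tnorm θ (Schreier 1) y ≤ tnorm θ (Schreier 1) (tsProj (G ⊤) (x + y)) := by
      apply tnorm_mono h0 h1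
      intro i
      rw [tsProj_apply]
      show |y i| ≤ |if i ∈ y.support then (x + y) i else 0|
      split_ifs with h
      · rw [Finsupp.add_apply, hxL i (hysupp i h), zero_add]
      · rw [Finsupp.notMem_support_iff.1 h]
    have e2 : ∑ l ∈ Finset.univ.erase l0, v l ≤
        ∑ l ∈ Finset.univ.erase l0, tnorm θ (Schreier 1) (tsProj (G (l : WithTop (Fin d))) (x + y)) := by
      apply Finset.sum_le_sum
      intro l _
      apply tnorm_mono h0 h1
      intro i
      rw [tsProj_apply, tsProj_apply]
      show _ ≤ |if i ∈ (E l).filter (· ≤ L) then (x + y) i else 0|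
      by_cases hi : i ≤ L
      · simp [hi, hyL i hi]
      · simp [hxL i (not_le.1 hi)]
    rw [herase] at e2
    set V := ∑ i, v i with hV
    have hdr : (⌊θ⁻¹⌋₊ + 1 : ℝ) ≤ d := by exact_mod_cast hd
    have hdpos : (0:ℝ) < d := by exact_mod_cast hd0
    have e3 : v l0 ≤ V / d := by rw [le_div_iff₀ hdpos]; linarith
    have e4 : 1 / (d:ℝ) ≤ 1 / (⌊θ⁻¹⌋₊ + 1 : ℝ) := one_div_le_one_div_of_le (by positivity) hdr
    have e5 : 1 / (⌊θ⁻¹⌋₊ + 1 : ℝ) ≤ 1 := by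
      rw [div_le_one (by positivity)]; linarith [Nat.cast_nonneg (α := ℝ) ⌊θ⁻¹⌋₊]
    have e6 : B * (1 - 1 / (⌊θ⁻¹⌋₊ + 1 : ℝ)) ≤ θ * (V - v l0) := by
      calc B * (1 - 1 / (⌊θ⁻¹⌋₊ + 1 : ℝ)) ≤ (θ * V) * (1 - 1 / (⌊θ⁻¹⌋₊ + 1 : ℝ)) := by
            apply mul_le_mul_of_nonneg_right hlt.le; linarith
        _ ≤ (θ * V) * (1 - 1 / d) := by
            apply mul_le_mul_of_nonneg_left _ (hB0.trans hlt.le); linarith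
        _ = θ * (V - V / d) := by ring
        _ ≤ _ := by gcongr
    have := mul_le_mul_of_nonneg_left e1 h0.le
    have := mul_le_mul_of_nonneg_left e2 h0.le
    linarith
  · intro i hi j hj hij a ha b hb
    induction i using WithTop.recTopCoe with
    | top => exact absurd hij (not_top_lt)
    | coe i =>
      have ha' : a ∈ (E i).filter (· ≤ L) := ha
      rw [Finset.mem_filter] at ha'
      induction j using WithTop.recTopCoe with
      | top => exact lt_of_le_of_lt ha'.2 (hysupp b hb)
      | coe j =>
        have hb' : b ∈ (E j).filter (· ≤ L) := hb
        rw [Finset.mem_filter] at hb'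
        exact hE.2.1 i j (WithTop.coe_lt_coe.1 hij) a ha'.1 b hb'.1
  · intro i hi a ha
    refine hcard.trans ?_
    induction i using WithTop.recTopCoe with
    | top => exact hdL.trans (PNat.coe_le_coe _ _ |>.2 (hysupp a ha).le)
    | coe i =>
      have ha' : a ∈ (E i).filter (· ≤ L) := ha
      rw [Finset.mem_filter] at ha'
      exact adm_lt hE i ha'.1

lemma flat_upper (h0 : 0 < θ) (h1 : θ ≤ 1/2) {x : ℕ+ →₀ ℝ} (F : Finset ℕ+) (i : ℕ+) (M : ℕ)
    (hi : i ∈ F) (hF : F.card = M + 1) (hiM : (i : ℕ) ≤ M)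
    (hx : ∀ j, |x j| = if j ∈ F then 1 else 0) :
    tnorm θ (Schreier 1) x ≤ max 1 (θ * M) := by
  classical
  apply tnorm_le_step h0 h1
  · intro j
    apply le_max_of_le_left
    rw [hx]; split_ifs <;> norm_num
  intro d E hE
  apply le_max_of_le_right
  apply mul_le_mul_of_nonneg_left _ h0.le
  have hxF : ∀ j, j ∉ F → x j = 0 := by
    intro j hj
    have := hx j
    rw [if_neg hj] at this
    exact abs_eq_zero.1 this
  set w : Fin d → ℕ := fun l => (F.filter (· ∈ E l)).card with hw
  have hl1 : ∀ l, tsL1 (tsProj (E l) x) = w l := by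
    intro l
    rw [tsL1_proj (E l) x hxF, hw]
    simp only [Finset.card_filter, Nat.cast_sum]
    apply Finset.sum_congr rfl
    intro j hj
    rw [hx, if_pos hj]; split_ifs <;> simp
  have hle : ∀ l, tnorm θ (Schreier 1) (tsProj (E l) x) ≤ w l := fun l =>
    (tnorm_le_L1 h0 h1 _).trans (hl1 l).le
  have hwsum : ∀ F' ⊆ F, (∀ j ∈ F, j ∉ F' → ∀ l, j ∉ E l) → ∑ l, w l ≤ F'.card := by
    intro F' hF' hmiss
    have h := sum_disj_le hE.2.1 F' (fun _ => 1) (fun _ => zero_le_one)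
    have h2 : ∀ l, w l = (F'.filter (· ∈ E l)).card := by
      intro l
      show (F.filter (· ∈ E l)).card = _
      congr 1
      ext j
      simp only [Finset.mem_filter]
      constructor
      · rintro ⟨a, b⟩
        refine ⟨?_, b⟩
        by_contra hc
        exact hmiss j a hc l b
      · rintro ⟨a, b⟩
        exact ⟨hF' a, b⟩
    have h3 : ((∑ l, w l : ℕ) : ℝ) ≤ F'.card := by
      push_cast
      simp only [h2, Finset.card_filter, Nat.cast_sum, Nat.cast_ite, Nat.cast_one, Nat.cast_zero]
      refine h.trans ?_
      simp
    exact_mod_cast h3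
  rcases Nat.lt_or_ge M (∑ l, w l) with hbig | hsmall
  · have htot : ∑ l, w l ≤ M + 1 := by
      rw [← hF]; exact hwsum F subset_rfl (fun j h h' => absurd h h')
    have hex : ∃ l, i ∈ E l := by
      by_contra hcon
      push Not at hcon
      have := hwsum (F.erase i) (Finset.erase_subset _ _) (by
        intro j hj hj' l
        have : j = i := by
          by_contra hne
          exact hj' (Finset.mem_erase.2 ⟨hne, hj⟩)
        rw [this]; exact hcon l)
      rw [Finset.card_erase_of_mem hi, hF] at this
      omega
    obtain ⟨l1, hl1'⟩ := hex
    have hdM : d ≤ M := (adm_lt hE l1 hl1').trans hiM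
    have hex2 : ∃ l0, 2 ≤ w l0 := by
      by_contra hcon
      push Not at hcon
      have : ∑ l, w l ≤ ∑ l : Fin d, 1 := Finset.sum_le_sum fun l _ => by have := hcon l; omega
      simp at this
      omega
    obtain ⟨l0, hl0⟩ := hex2
    have hl0r : (2:ℝ) ≤ w l0 := by exact_mod_cast hl0
    have hb : tnorm θ (Schreier 1) (tsProj (E l0) x) ≤ w l0 - 1 := by
      apply tnorm_le_supL1 h0 h1
      · intro j
        refine (abs_tsProj_le _ _ _).trans ?_
        rw [hx]; split_ifs <;> linarith
      · rw [hl1]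
        nlinarith
    rw [← Finset.add_sum_erase Finset.univ _ (Finset.mem_univ l0)]
    have h5 : ∑ l ∈ Finset.univ.erase l0, tnorm θ (Schreier 1) (tsProj (E l) x) ≤
      ∑ l ∈ Finset.univ.erase l0, (w l : ℝ) := Finset.sum_le_sum fun l _ => hle l
    have h6 := Finset.add_sum_erase Finset.univ (fun l => (w l : ℝ)) (Finset.mem_univ l0)
    have h7 : (∑ l, (w l : ℝ)) ≤ M + 1 := by exact_mod_cast htot
    linarith
  · calc _ ≤ ∑ l, (w l : ℝ) := Finset.sum_le_sum fun l _ => hle l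
      _ ≤ M := by exact_mod_cast hsmall

lemma pert_upper (h0 : 0 < θ) (h1 : θ ≤ 1/2) {x : ℕ+ →₀ ℝ} (G : Finset ℕ+) (i : ℕ+) (τ : ℝ)
    (hτ0 : 0 ≤ τ) (hτ : τ ≤ 1) (hiG : i ∉ G) (hi : |x i| ≤ 1) (hG : ∀ j ∈ G, |x j| ≤ τ)
    (hz : ∀ j, j ≠ i → j ∉ G → x j = 0) (hsum : θ * ∑ j ∈ G, |x j| ≤ 1) :
    tnorm θ (Schreier 1) x ≤ 1 + θ * i * τ := by
  classical
  have hB : 0 ≤ θ * i * τ := by positivity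
  have hxx : ∀ j, j ≠ i → |x j| ≤ τ := by
    intro j hj
    by_cases h : j ∈ G
    · exact hG j h
    · rw [hz j hj h]; simpa using hτ0
  have hx1 : ∀ j, |x j| ≤ 1 := by
    intro j
    by_cases h : j = i
    · rw [h]; exact hi
    · exact (hxx j h).trans hτ
  have hxF : ∀ j, j ∉ insert i G → x j = 0 := by
    intro j hj
    simp only [Finset.mem_insert, not_or] at hj
    exact hz j hj.1 hj.2
  apply tnorm_le_step h0 h1
  · intro j; linarith [hx1 j]
  intro d E hE
  have hdis := sum_disj_le hE.2.1 G (fun j => |x j|) (fun _ => abs_nonneg _)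
  set g : Fin d → ℝ := fun l => ∑ j ∈ G, (if j ∈ E l then |x j| else 0) with hg
  have hg0 : ∀ l, 0 ≤ g l := fun l => Finset.sum_nonneg fun j _ => by split_ifs <;> simp
  have hl1 : ∀ l, tsL1 (tsProj (E l) x) = (if i ∈ E l then |x i| else 0) + g l := by
    intro l
    rw [tsL1_proj (E l) x hxF, Finset.sum_insert hiG]
  by_cases hex : ∃ l, i ∈ E l
  · obtain ⟨l1, hl1'⟩ := hex
    have hdi : (d:ℝ) ≤ i := by exact_mod_cast (adm_lt hE l1 hl1')
    have hb : ∀ l, tnorm θ (Schreier 1) (tsProj (E l) x) ≤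
        (if i ∈ E l then 1 else 0) + τ + θ * g l := by
      intro l
      have hgl : 0 ≤ θ * g l := mul_nonneg h0.le (hg0 l)
      apply tnorm_le_supL1 h0 h1
      · intro j
        rw [tsProj_apply]
        by_cases hj : j = i
        · subst hj
          split_ifs
          · linarith
          · simp; linarith
        · have h5 : (0:ℝ) ≤ (if i ∈ E l then 1 else 0) := by split_ifs <;> norm_num
          have := hxx j hj
          split_ifs at h5 ⊢ <;> first | linarith | (simp; linarith)
      · rw [hl1]
        split_ifs
        · have := abs_nonneg (x i); nlinarith
        · nlinarith
    have hone : ∑ l, (if i ∈ E l then (1:ℝ) else 0) ≤ 1 := by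
      have := sum_disj_le hE.2.1 {i} (fun _ => 1) (fun _ => zero_le_one)
      simpa only [Finset.sum_singleton] using this
    have htot : ∑ l, tnorm θ (Schreier 1) (tsProj (E l) x) ≤ 2 + i * τ := by
      calc _ ≤ ∑ l, ((if i ∈ E l then 1 else 0) + τ + θ * g l) := Finset.sum_le_sum fun l _ => hb l
        _ = ∑ l, (if i ∈ E l then (1:ℝ) else 0) + d * τ + θ * ∑ l, g l := by
          rw [Finset.sum_add_distrib, Finset.sum_add_distrib, Finset.mul_sum]; simp
        _ ≤ 1 + i * τ + θ * ∑ j ∈ G, |x j| := by gcongr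
        _ ≤ _ := by linarith
    have := mul_le_mul_of_nonneg_left htot h0.le
    nlinarith
  · push Not at hex
    have : ∑ l, tnorm θ (Schreier 1) (tsProj (E l) x) ≤ ∑ j ∈ G, |x j| := by
      refine le_trans (Finset.sum_le_sum fun l _ => ?_) hdis
      refine (tnorm_le_L1 h0 h1 _).trans ?_
      rw [hl1, if_neg (hex l), zero_add]
    have := mul_le_mul_of_nonneg_left this h0.le
    linarith

lemma perm_le (h0 : 0 < θ) (h1 : θ ≤ 1/2) {x y : ℕ+ →₀ ℝ} (π : Equiv.Perm ℕ+)
    (hπ : ∀ i : ℕ+, ⌊θ⁻¹⌋₊ < (i : ℕ) → π i = i) (h : ∀ i, |y (π i)| = |x i|) :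
    tnorm θ (Schreier 1) y ≤ tnorm θ (Schreier 1) x := by
  apply tnorm_le_reduced h0 h1
  · intro j
    obtain ⟨i, rfl⟩ := π.surjective j
    rw [h]; exact abs_le_tnorm h0 h1 x i
  · intro d E hE hd
    refine le_trans ?_ (adm_le_tnorm h0 h1 x hE)
    apply mul_le_mul_of_nonneg_left _ h0.le
    apply Finset.sum_le_sum
    intro l _
    apply tnorm_mono h0 h1
    intro j
    rw [tsProj_apply, tsProj_apply]
    split_ifs with hj
    · have := h j
      rw [hπ j (lt_of_lt_of_le hd (adm_lt hE l hj))] at this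
      exact this.le
    · simp

def tsOn (F : Finset ℕ+) (a : ℕ+ → ℝ) : ℕ+ →₀ ℝ := Finsupp.indicator F (fun i _ => a i)

lemma tsOn_apply (F : Finset ℕ+) (a : ℕ+ → ℝ) (i : ℕ+) :
    tsOn F a i = if i ∈ F then a i else 0 := by
  simp [tsOn, Finsupp.indicator_apply]

section X

variable {X : Type*} [NormedAddCommGroup X] [NormedSpace ℝ X] {e : ℕ+ → X}

lemma sum_tsOn (F : Finset ℕ+) (a : ℕ+ → ℝ) :
    ((tsOn F a).sum fun i c => c • e i) = ∑ k ∈ F, a k • e k := by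
  rw [Finsupp.sum_of_support_subset (s := F)]
  · apply Finset.sum_congr rfl
    intro k hk
    rw [tsOn_apply, if_pos hk]
  · exact Finsupp.support_indicator_subset _ _
  · simp

lemma norm_tsOn (hX : IsTsirelsonSpace θ 1 X e) (F : Finset ℕ+) (a : ℕ+ → ℝ) :
    ‖∑ k ∈ F, a k • e k‖ = tnorm θ (Schreier 1) (tsOn F a) := by
  rw [← hX.norm_embed, sum_tsOn]

lemma norm_part_le (h0 : 0 < θ) (h1 : θ ≤ 1/2) (hX : IsTsirelsonSpace θ 1 X e) {a : ℕ+ → ℝ} {x : X}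
    (hx : HasSum (fun k => a k • e k) x) (F : Finset ℕ+) :
    tnorm θ (Schreier 1) (tsOn F a) ≤ ‖x‖ := by
  have h2 : Filter.Tendsto (fun F : Finset ℕ+ => ‖∑ k ∈ F, a k • e k‖) Filter.atTop (nhds ‖x‖) :=
    hx.norm
  apply ge_of_tendsto h2
  filter_upwards [Filter.eventually_ge_atTop F] with F' hF'
  rw [norm_tsOn hX]
  apply tnorm_mono h0 h1
  intro i
  rw [tsOn_apply, tsOn_apply]
  by_cases h : i ∈ F
  · simp [h, hF' h]
  · simp [h]

lemma coord_le (h0 : 0 < θ) (h1 : θ ≤ 1/2) (hX : IsTsirelsonSpace θ 1 X e) {a : ℕ+ → ℝ} {x : X}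
    (hx : HasSum (fun k => a k • e k) x) (k : ℕ+) : |a k| ≤ ‖x‖ := by
  refine le_trans ?_ (norm_part_le h0 h1 hX hx {k})
  have := abs_le_tnorm (S := Schreier 1) h0 h1 (tsOn {k} a) k
  simpa [tsOn_apply] using this

lemma approx {a : ℕ+ → ℝ} {x : X} (hx : HasSum (fun k => a k • e k) x) {η : ℝ} (hη : 0 < η) :
    ∃ L0 : ℕ+, ∀ L ≥ L0, ‖x - ∑ k ∈ Finset.Iic L, a k • e k‖ < η := by
  have h2 := (Metric.tendsto_nhds.1 hx) η hη
  obtain ⟨F0, hF0⟩ := Filter.eventually_atTop.1 h2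
  obtain ⟨L0, hL0⟩ := F0.bddAbove
  refine ⟨L0, fun L hL => ?_⟩
  have := hF0 (Finset.Iic L) (fun k hk => Finset.mem_Iic.2 ((hL0 hk).trans hL))
  rw [dist_comm, dist_eq_norm] at this
  exact this

lemma sup_attained (h0 : 0 < θ) (h1 : θ ≤ 1/2) (hX : IsTsirelsonSpace θ 1 X e) {a : ℕ+ → ℝ} {x : X}
    (hx : HasSum (fun k => a k • e k) x) (hlt : ∀ k, |a k| < 1) : ∃ b < 1, ∀ k, |a k| ≤ b := by
  have h2 := (Metric.tendsto_nhds.1 hx) (1/2) (by norm_num)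
  have h3 : Filter.Tendsto (fun k => a k • e k) Filter.cofinite (nhds 0) :=
    hx.summable.tendsto_cofinite_zero
  have hen : ∀ k, |a k| ≤ ‖a k • e k‖ := by
    intro k
    have : a k • e k = ∑ j ∈ {k}, a j • e j := by simp
    rw [this, norm_tsOn hX]
    have := abs_le_tnorm (S := Schreier 1) h0 h1 (tsOn {k} a) k
    simpa [tsOn_apply] using this
  have h4 := (Metric.tendsto_nhds.1 h3) (1/2) (by norm_num)
  rw [Filter.eventually_cofinite] at h4
  set F := h4.toFinset with hF
  have hout : ∀ k ∉ F, |a k| ≤ 1/2 := by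
    intro k hk
    rw [hF, Set.Finite.mem_toFinset] at hk
    simp only [Set.mem_ofPred_eq, not_not, dist_zero_right] at hk
    exact (hen k).trans hk.le
  by_cases hne : F.Nonempty
  · obtain ⟨k0, _, hk0⟩ := Finset.exists_max_image F (fun k => |a k|) hne
    refine ⟨max (1/2) |a k0|, max_lt (by norm_num) (hlt k0), fun k => ?_⟩
    by_cases hk : k ∈ F
    · exact le_max_of_le_right (hk0 k hk)
    · exact le_max_of_le_left (hout k hk)
  · refine ⟨1/2, by norm_num, fun k => hout k ?_⟩
    intro h; exact hne ⟨k, h⟩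

lemma compact_sub (a : ℕ+ → ℕ+ → ℝ) (ha : ∀ i k, |a i k| ≤ 1) :
    ∃ α : ℕ+ → ℝ, ∀ (L : ℕ+) (η : ℝ), 0 < η → {j : ℕ+ | ∀ k ≤ L, |a j k - α k| < η}.Infinite := by
  have hc : IsCompact (Set.pi Set.univ (fun _ : ℕ+ => Set.Icc (-1:ℝ) 1)) :=
    isCompact_univ_pi fun _ => isCompact_Icc
  obtain ⟨α, -, φ, hφ, hlim⟩ := hc.tendsto_subseq (x := fun n : ℕ => a n.succPNat)
    (fun n => by intro k _; exact abs_le.1 (ha _ k))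
  refine ⟨α, fun L η hη => ?_⟩
  rw [tendsto_pi_nhds] at hlim
  have h2 : ∀ᶠ n in Filter.atTop, ∀ k ∈ Finset.Iic L, |a (φ n).succPNat k - α k| < η := by
    rw [Filter.eventually_all_finset]
    intro k _
    have := (Metric.tendsto_nhds.1 (hlim k)) η hη
    simpa [Real.dist_eq] using this
  obtain ⟨n0, hn0⟩ := Filter.eventually_atTop.1 h2
  have hinj : Function.Injective (fun n => (φ (n0 + n)).succPNat) := by
    intro n m h
    have := hφ.injective (Nat.succPNat_injective h)
    omega
  refine (Set.infinite_range_of_injective hinj).mono ?_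
  rintro _ ⟨n, rfl⟩ k hk
  exact hn0 (n0 + n) (by omega) k (Finset.mem_Iic.2 hk)

lemma exists_signs (G : Finset ℕ+) (m : ℕ) (hG : G.card = 2 * m) :
    ∃ s : ℕ+ → ℝ, (∀ j, |s j| = 1) ∧ ∑ j ∈ G, s j = 0 := by
  classical
  obtain ⟨H, hH, hHc⟩ := Finset.exists_subset_card_eq (s := G) (n := m) (by omega)
  refine ⟨fun j => if j ∈ H then 1 else -1, fun j => by dsimp only; split_ifs <;> simp, ?_⟩
  rw [← Finset.sum_sdiff hH]
  have e1 : ∑ j ∈ G \ H, (if j ∈ H then (1:ℝ) else -1) = ∑ j ∈ G \ H, (-1 : ℝ) :=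
    Finset.sum_congr rfl fun j hj => if_neg (Finset.mem_sdiff.1 hj).2
  have e2 : ∑ j ∈ H, (if j ∈ H then (1:ℝ) else -1) = ∑ j ∈ H, (1 : ℝ) :=
    Finset.sum_congr rfl fun j hj => if_pos hj
  rw [e1, e2]
  have h3 : (G \ H).card = m := by
    rw [Finset.card_sdiff_of_subset hH]; omega
  simp [h3, hHc]

lemma card_Iic_pnat (L : ℕ+) : (Finset.Iic L).card = (L : ℕ) := by
  have : Finset.Iic L = Finset.Icc 1 L := by ext k; simp
  rw [this, PNat.card_Icc]; simp

lemma peak (h0 : 0 < θ) (h1 : θ ≤ 1/2) (hX : IsTsirelsonSpace θ 1 X e) (U : X →L[ℝ] X)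
    (hU : ∀ x, ‖U x‖ = ‖x‖) (a : ℕ+ → ℕ+ → ℝ)
    (ha : ∀ i, HasSum (fun k => a i k • e k) (U (e i))) (ha1 : ∀ i k, |a i k| ≤ 1)
    (hen : ∀ i, ‖e i‖ = 1) (i : ℕ+) : ∃ k, |a i k| = 1 := by
  by_contra hcon
  push Not at hcon
  obtain ⟨b, hb1, hb⟩ := sup_attained h0 h1 hX (ha i) (fun k => lt_of_le_of_ne (ha1 i k) (hcon k))
  set N : ℝ := ⌊θ⁻¹⌋₊ + 1 with hN
  have hNθ : θ⁻¹ < N := Nat.lt_floor_add_one _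
  have hN0 : 0 < N := by positivity
  have hc : 0 < θ - 1 / N := by
    have : N⁻¹ < θ := inv_lt_of_inv_lt₀ h0 hNθ
    rw [one_div]; linarith
  have hN1 : 0 ≤ 1 / N := by positivity
  obtain ⟨η, hη0, hηb, hηc⟩ : ∃ η > 0, η ≤ 1 - b ∧ 7 * η < θ - 1 / N := by
    refine ⟨min (1 - b) ((θ - 1 / N) / 8), ?_, min_le_left _ _, ?_⟩
    · apply lt_min <;> linarith
    · have := min_le_right (1 - b) ((θ - 1 / N) / 8); linarith
  obtain ⟨L, hL⟩ := approx (ha i) hη0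
  have hxL := hL L le_rfl
  obtain ⟨α, hα⟩ := compact_sub a ha1
  have hLpos : (0:ℝ) < (L : ℕ) := by exact_mod_cast L.pos
  set η1 := η * θ / (L : ℕ) with hη1
  have hη1pos : 0 < η1 := by positivity
  obtain ⟨m, hm⟩ := exists_nat_gt (max (θ⁻¹) ((i : ℕ) / η))
  have hmθ : θ⁻¹ < m := lt_of_le_of_lt (le_max_left _ _) hm
  have hmi : (i : ℕ) / η < m := lt_of_le_of_lt (le_max_right _ _) hm
  have hm0 : (0:ℝ) < m := lt_trans (by positivity) hmθ
  have hinf := (hα L η1 hη1pos).sdiff (Set.finite_Iic (max i (Nat.succPNat (2 * m))))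
  obtain ⟨G, hGsub, hGc⟩ := hinf.exists_subset_card_eq (2 * m)
  obtain ⟨s, hs1, hs0⟩ := exists_signs G m hGc
  have hG1 : ∀ j ∈ G, ∀ k ≤ L, |a j k - α k| < η1 := fun j hj => (hGsub hj).1
  have hG2 : ∀ j ∈ G, i < j ∧ 2 * m ≤ (j : ℕ) := by
    intro j hj
    have := (hGsub hj).2
    simp only [Set.mem_Iic, not_le, max_lt_iff] at this
    refine ⟨this.1, ?_⟩
    have h3 := (PNat.coe_lt_coe _ _).2 this.2
    rw [Nat.succPNat_coe] at h3
    omega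
  have hiG : i ∉ G := fun h => lt_irrefl _ (hG2 i h).1
  set τ : ℝ := 1 / (θ * (2 * m)) with hτ
  have hτ0 : 0 < τ := by positivity
  have hτ2 : θ * (2 * m * τ) = 1 := by rw [hτ]; field_simp
  have hθm : 1 < θ * m := by
    have := mul_lt_mul_of_pos_left hmθ h0
    rwa [mul_inv_cancel₀ h0.ne'] at this
  have hτ1 : τ ≤ 1 := by
    rw [hτ, div_le_one (by positivity)]; linarith
  have habs : ∀ j, |τ * s j| = τ := by
    intro j; rw [abs_mul, hs1, mul_one, abs_of_pos hτ0]
  have hsumabs : θ * ∑ j ∈ G, |τ * s j| = 1 := by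
    simp only [habs]
    rw [Finset.sum_const, hGc, nsmul_eq_mul]
    push_cast
    exact hτ2
  -- the vector y
  set y : X := ∑ j ∈ G, (τ * s j) • e j with hy
  have hynorm : 1 ≤ ‖y‖ := by
    rw [hy, norm_tsOn hX (a := fun j => τ * s j)]
    have := schreier_le h0 h1 (tsOn G fun j => τ * s j) G
      (fun j hj => by rw [hGc]; exact (hG2 j hj).2)
    refine le_trans (le_of_eq ?_) this
    rw [← hsumabs]
    congr 1
    apply Finset.sum_congr rfl
    intro j hj
    rw [tsOn_apply, if_pos hj]
  have heynorm : ‖e i + y‖ ≤ 1 + η := by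
    have e1 : e i + y = ∑ j ∈ insert i G, (if j = i then 1 else τ * s j) • e j := by
      rw [Finset.sum_insert hiG, hy]
      simp only [if_true, one_smul]
      congr 1
      apply Finset.sum_congr rfl
      intro j hj
      rw [if_neg]
      rintro rfl; exact hiG hj
    rw [e1, norm_tsOn hX (a := fun j => if j = i then 1 else τ * s j)]
    have hval : ∀ j ∈ G, (tsOn (insert i G) fun j => if j = i then 1 else τ * s j) j = τ * s j := by
      intro j hj
      have : j ≠ i := by rintro rfl; exact hiG hj
      simp [tsOn_apply, hj, this]
    refine (pert_upper h0 h1 G i τ hτ0.le hτ1 hiG ?_ ?_ ?_ ?_).trans ?_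
    · simp [tsOn_apply]
    · intro j hj
      rw [hval j hj, habs]
    · intro j hj hjG
      simp [tsOn_apply, hj, hjG]
    · refine le_trans (le_of_eq ?_) hsumabs.le
      congr 1
      apply Finset.sum_congr rfl
      intro j hj
      rw [hval j hj]
    · have : θ * (i : ℕ) * τ ≤ η := by
        rw [div_lt_iff₀ hη0] at hmi
        have h5 : θ * (i : ℕ) * τ ≤ θ * (m * η) * τ := by gcongr
        have h6 : θ * (m * η) * τ = η / 2 := by
          have : θ * (m * η) * τ = (θ * (2 * m * τ)) * η / 2 := by ring
          rw [this, hτ2]; ring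
        linarith
      linarith
  -- coordinates of U y
  set w : ℕ+ → ℝ := fun k => ∑ j ∈ G, (τ * s j) * a j k with hw
  have hwsum : HasSum (fun k => w k • e k) (U y) := by
    rw [hy, map_sum]
    have h5 : HasSum (fun k => ∑ j ∈ G, (τ * s j) • (a j k • e k)) (∑ j ∈ G, U ((τ * s j) • e j)) := by
      apply hasSum_sum
      intro j _
      rw [map_smul]
      exact (ha j).const_smul _
    convert h5 using 2 with k
    rw [hw, Finset.sum_smul]
    apply Finset.sum_congr rfl
    intro j _
    rw [smul_smul]
  have hwk : ∀ k ≤ L, |w k| ≤ η1 / θ := by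
    intro k hk
    have e1 : w k = ∑ j ∈ G, (τ * s j) * (a j k - α k) := by
      have : ∑ j ∈ G, (τ * s j) * α k = 0 := by
        rw [← Finset.sum_mul, ← Finset.mul_sum, hs0]; simp
      simp only [mul_sub, Finset.sum_sub_distrib, this, sub_zero, hw]
    rw [e1]
    calc _ ≤ ∑ j ∈ G, |(τ * s j) * (a j k - α k)| := Finset.abs_sum_le_sum_abs _ _
      _ ≤ ∑ j ∈ G, τ * η1 := by
        apply Finset.sum_le_sum
        intro j hj
        rw [abs_mul, habs]
        exact mul_le_mul_of_nonneg_left (hG1 j hj k hk).le hτ0.le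
      _ = (θ * (2 * m * τ)) * η1 / θ := by
        rw [Finset.sum_const, hGc, nsmul_eq_mul]; push_cast; field_simp
      _ = η1 / θ := by rw [hτ2, one_mul]
  have hPw : ‖∑ k ∈ Finset.Iic L, w k • e k‖ ≤ η := by
    calc _ ≤ ∑ k ∈ Finset.Iic L, ‖w k • e k‖ := norm_sum_le _ _
      _ ≤ ∑ k ∈ Finset.Iic L, η1 / θ := by
        apply Finset.sum_le_sum
        intro k hk
        rw [norm_smul, hen, mul_one]
        exact hwk k (Finset.mem_Iic.1 hk)
      _ = (L : ℕ) * (η1 / θ) := by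
        rw [Finset.sum_const, nsmul_eq_mul]
        rw [card_Iic_pnat]
      _ = η := by rw [hη1]; field_simp
  obtain ⟨L0, hL0⟩ := approx hwsum hη0
  set L' := max L L0 with hL'
  have hwL := hL0 L' (le_max_right _ _)
  have hsplit : ∑ k ∈ Finset.Iic L', w k • e k =
      ∑ k ∈ Finset.Iic L, w k • e k + ∑ k ∈ Finset.Ioc L L', w k • e k := by
    rw [← Finset.sum_union]
    · congr 1
      ext k
      have : L ≤ L' := le_max_left _ _
      simp only [Finset.mem_Iic, Finset.mem_union, Finset.mem_Ioc]
      constructor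
      · intro h
        rcases le_or_gt k L with h' | h'
        · exact Or.inl h'
        · exact Or.inr ⟨h', h⟩
      · rintro (h | h)
        · exact h.trans this
        · exact h.2
    · rw [Finset.disjoint_left]
      intro k h1 h2
      exact absurd (Finset.mem_Iic.1 h1) (not_le.2 (Finset.mem_Ioc.1 h2).1)
  set PA := ∑ k ∈ Finset.Iic L, a i k • e k with hPA
  set PB := ∑ k ∈ Finset.Iic L, w k • e k with hPB
  set PC := ∑ k ∈ Finset.Ioc L L', w k • e k with hPC
  rw [hsplit] at hwL
  have hUe : ‖U (e i)‖ = 1 := by rw [hU, hen]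
  have hUy : 1 ≤ ‖U y‖ := by rw [hU]; exact hynorm
  have hUs : ‖U (e i) + U y‖ ≤ 1 + η := by rw [← map_add, hU]; exact heynorm
  have hA : 1 - η < ‖PA‖ := by
    have := norm_sub_norm_le (U (e i)) PA
    linarith
  have hC : 1 - 2 * η < ‖PC‖ := by
    have h5 := norm_sub_norm_le (U y) (PB + PC)
    have h6 := norm_add_le PB PC
    linarith
  have hAC : ‖PA + PC‖ ≤ 1 + 4 * η := by
    have : PA + PC = (U (e i) + U y) - (U (e i) - PA) - (U y - (PB + PC)) - PB := by abel
    rw [this]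
    have h5 := norm_sub_le ((U (e i) + U y) - (U (e i) - PA) - (U y - (PB + PC))) PB
    have h6 := norm_sub_le ((U (e i) + U y) - (U (e i) - PA)) (U y - (PB + PC))
    have h7 := norm_sub_le (U (e i) + U y) (U (e i) - PA)
    linarith
  have hACn : ‖PA + PC‖ = tnorm θ (Schreier 1) (tsOn (Finset.Iic L) (a i) + tsOn (Finset.Ioc L L') w) := by
    rw [← hX.norm_embed, Finsupp.sum_add_index', sum_tsOn, sum_tsOn]
    · simp
    · intro k c c'; exact add_smul _ _ _
  rw [hPA, norm_tsOn hX] at hA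
  rw [hPC, norm_tsOn hX] at hC
  have key := tail_lower h0 h1 (x := tsOn (Finset.Iic L) (a i)) (y := tsOn (Finset.Ioc L L') w)
    (B := 1 - η) (by
      intro k
      rw [tsOn_apply]
      split_ifs
      · linarith [hb k]
      · have := (abs_nonneg _).trans (hb 1); simp; linarith) hA L
    (by intro k hk; rw [tsOn_apply, if_neg]; simpa using hk)
    (by intro k hk; rw [tsOn_apply, if_neg]; simp [hk])
  rw [← hACn, ← hN] at key
  have hθC : θ * (1 - 2 * η) ≤ θ * tnorm θ (Schreier 1) (tsOn (Finset.Ioc L L') w) :=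
    mul_le_mul_of_nonneg_left hC.le h0.le
  have h8 : 0 ≤ η * (1 / N) := by positivity
  have h9 : θ * η ≤ 1 / 2 * η := by gcongr
  nlinarith

lemma index_bound (h0 : 0 < θ) (h1 : θ ≤ 1/2) (hX : IsTsirelsonSpace θ 1 X e) (U : X →L[ℝ] X)
    (hU : ∀ x, ‖U x‖ = ‖x‖) (a : ℕ+ → ℕ+ → ℝ)
    (ha : ∀ i, HasSum (fun k => a i k • e k) (U (e i)))
    (p : ℕ+ → ℕ+) (hp : ∀ i, |a i (p i)| = 1) (hp0 : ∀ i j, i ≠ j → a j (p i) = 0)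
    (hinj : Function.Injective p) (i : ℕ+) : (p i : ℕ) ≤ max (i : ℕ) ⌊θ⁻¹⌋₊ := by
  classical
  by_contra hcon
  push Not at hcon
  set M := max (i : ℕ) ⌊θ⁻¹⌋₊ with hM
  have hinf : (({j | (p j : ℕ) ≤ M} ∪ {i})ᶜ : Set ℕ+).Infinite := by
    apply Set.Finite.infinite_compl
    apply Set.Finite.union _ (Set.finite_singleton i)
    have : {j | (p j : ℕ) ≤ M} ⊆ p ⁻¹' (Set.Iic M.succPNat) := by
      intro j hj
      have hj' : (p j : ℕ) ≤ M := hj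
      simp only [Set.mem_preimage, Set.mem_Iic]
      rw [← PNat.coe_le_coe, Nat.succPNat_coe]; omega
    exact ((Set.finite_Iic _).preimage hinj.injOn).subset this
  obtain ⟨G, hG, hGc⟩ := hinf.exists_subset_card_eq M
  have hG' : ∀ j ∈ G, M < (p j : ℕ) ∧ j ≠ i := by
    intro j hj
    have := hG hj
    simp only [Set.mem_compl_iff, Set.mem_union, Set.mem_singleton_iff, not_or] at this
    exact ⟨not_le.1 this.1, this.2⟩
  have hiG : i ∉ G := fun h => (hG' i h).2 rfl
  set F := insert i G with hF
  have hFc : F.card = M + 1 := by rw [hF, Finset.card_insert_of_notMem hiG, hGc]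
  have hFp : ∀ j ∈ F, M < (p j : ℕ) := by
    intro j hj
    rcases Finset.mem_insert.1 hj with rfl | h
    · exact hcon
    · exact (hG' j h).1
  set z : X := ∑ j ∈ F, (1:ℝ) • e j with hz
  have hz1 : ‖z‖ ≤ max 1 (θ * M) := by
    rw [hz, norm_tsOn hX (a := fun _ => 1)]
    apply flat_upper h0 h1 F i M (Finset.mem_insert_self _ _) hFc (le_max_left _ _)
    intro j
    rw [tsOn_apply]; split_ifs <;> simp
  have hUz : HasSum (fun k => (∑ j ∈ F, a j k) • e k) (U z) := by
    rw [hz, map_sum]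
    simp only [one_smul, Finset.sum_smul]
    exact hasSum_sum fun j _ => ha j
  have hlow := norm_part_le h0 h1 hX hUz (F.image p)
  have hlow2 := schreier_le h0 h1 (tsOn (F.image p) fun k => ∑ j ∈ F, a j k) (F.image p) (by
    intro k hk
    obtain ⟨j, hj, rfl⟩ := Finset.mem_image.1 hk
    rw [Finset.card_image_of_injective _ hinj, hFc]
    exact hFp j hj)
  rw [Finset.sum_image (fun x _ y _ h => hinj h)] at hlow2
  have hval : ∀ j ∈ F, |(tsOn (F.image p) fun k => ∑ j ∈ F, a j k) (p j)| = 1 := by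
    intro j hj
    rw [tsOn_apply, if_pos (Finset.mem_image_of_mem _ hj), Finset.sum_eq_single j]
    · exact hp j
    · intro j' _ hne
      exact hp0 j j' hne.symm
    · intro h; exact absurd hj h
  rw [Finset.sum_congr rfl hval, Finset.sum_const, hFc, nsmul_eq_mul, mul_one] at hlow2
  rw [hU] at hlow
  have h5 : θ * (M + 1 : ℝ) ≤ max 1 (θ * M) := by
    have := hlow2.trans (hlow.trans hz1)
    push_cast at this
    exact this
  have h6 : θ⁻¹ < M + 1 := by
    refine (Nat.lt_floor_add_one _).trans_le ?_
    have : ⌊θ⁻¹⌋₊ ≤ M := le_max_right _ _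
    have : (⌊θ⁻¹⌋₊ : ℝ) ≤ M := by exact_mod_cast this
    linarith
  have h7 : 1 < θ * (M + 1 : ℝ) := by
    have := mul_lt_mul_of_pos_left h6 h0
    rwa [mul_inv_cancel₀ h0.ne'] at this
  rcases le_max_iff.1 h5 with h | h <;> nlinarith

lemma perm_of_bound (p : ℕ+ → ℕ+) (hinj : Function.Injective p) (N : ℕ) (hN : 0 < N)
    (hb : ∀ i, (p i : ℕ) ≤ max (i : ℕ) N) :
    Function.Surjective p ∧ ∀ i : ℕ+, N < (i : ℕ) → p i = i := by
  classical
  have himg : ∀ n : ℕ+, N ≤ (n : ℕ) → (Finset.Iic n).image p = Finset.Iic n := by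
    intro n hn
    apply Finset.eq_of_subset_of_card_le
    · intro k hk
      obtain ⟨j, hj, rfl⟩ := Finset.mem_image.1 hk
      rw [Finset.mem_Iic] at hj ⊢
      rw [← PNat.coe_le_coe] at hj ⊢
      exact (hb j).trans (max_le hj hn)
    · rw [Finset.card_image_of_injective _ hinj]
  constructor
  · intro k
    have : k ∈ Finset.Iic (max k ⟨N, hN⟩) := Finset.mem_Iic.2 (le_max_left _ _)
    rw [← himg _ (PNat.coe_le_coe _ _ |>.2 (le_max_right k ⟨N, hN⟩))] at this
    obtain ⟨j, _, hj⟩ := Finset.mem_image.1 this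
    exact ⟨j, hj⟩
  · intro i hi
    have h1 : (p i : ℕ) ≤ i := (hb i).trans (max_le le_rfl hi.le)
    by_contra hne
    have hne' : (p i : ℕ) ≠ i := fun h => hne (PNat.coe_injective h)
    have hi1 : 0 < (i : ℕ) - 1 := by omega
    set n : ℕ+ := ⟨(i : ℕ) - 1, hi1⟩ with hn
    have hnv : (n : ℕ) = (i : ℕ) - 1 := rfl
    have h2 : p i ∈ Finset.Iic n := by
      rw [Finset.mem_Iic, ← PNat.coe_le_coe]; omega
    rw [← himg n (by omega)] at h2
    obtain ⟨j, hj, hji⟩ := Finset.mem_image.1 h2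
    have := hinj hji
    subst this
    rw [Finset.mem_Iic, ← PNat.coe_le_coe] at hj
    omega

lemma forward (h0 : 0 < θ) (h1 : θ ≤ 1/2) (hX : IsTsirelsonSpace θ 1 X e) (U : X →L[ℝ] X)
    (hU : ∀ x, ‖U x‖ = ‖x‖) : ∃ (ε : ℕ+ → ℝ) (π : Equiv.Perm ℕ+),
        (∀ i, ε i = 1 ∨ ε i = -1) ∧
        (∀ i : ℕ+, ⌊θ⁻¹⌋₊ < (i : ℕ) → π i = i) ∧
        (∀ i : ℕ+, U (e i) = ε i • e (π i)) := by
  classical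
  have hcomb : ∀ (i j : ℕ+) (c : ℝ), |c| ≤ 1 → i ≠ j → ‖e i + c • e j‖ ≤ 1 := by
    intro i j c hc hij
    have e1 : e i + c • e j = ∑ k ∈ {i, j}, (if k = i then 1 else c) • e k := by
      rw [Finset.sum_pair hij]; simp [hij.symm]
    rw [e1, norm_tsOn hX (a := fun k => if k = i then 1 else c)]
    apply tnorm_le_supL1 h0 h1
    · intro k
      rw [tsOn_apply]; split_ifs <;> simp [hc]
    · rw [tsL1_eq (F := {i, j}), Finset.sum_pair hij]
      · simp only [tsOn_apply]
        simp [hij.symm]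
        nlinarith [abs_nonneg c]
      · intro k hk
        rw [tsOn_apply, if_neg hk]
  have hen : ∀ i, ‖e i‖ = 1 := by
    intro i
    apply le_antisymm
    · have := hcomb i (i + 1) 0 (by simp) (by
        intro h
        have := congrArg PNat.val h
        simp at this)
      simpa using this
    · have e1 : e i = ∑ k ∈ {i}, (1:ℝ) • e k := by simp
      rw [e1, norm_tsOn hX (a := fun k => 1)]
      have := abs_le_tnorm (S := Schreier 1) h0 h1 (tsOn {i} fun _ => 1) i
      simpa [tsOn_apply] using this
  choose a ha using fun i => (hX.expansion (U (e i))).exists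
  have ha1 : ∀ i k, |a i k| ≤ 1 := by
    intro i k
    have := coord_le h0 h1 hX (ha i) k
    rwa [hU, hen] at this
  choose p hp using peak h0 h1 hX U hU a ha ha1 hen
  have hp0 : ∀ i j, i ≠ j → a j (p i) = 0 := by
    intro i j hij
    have key : ∀ c : ℝ, |c| ≤ 1 → |a i (p i) + c * a j (p i)| ≤ 1 := by
      intro c hc
      have h2 : HasSum (fun k => (a i k + c * a j k) • e k) (U (e i + c • e j)) := by
        rw [map_add, map_smul]
        have := (ha i).add ((ha j).const_smul c)
        simpa only [add_smul, mul_smul] using this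
      have := coord_le h0 h1 hX h2 (p i)
      rw [hU] at this
      exact this.trans (hcomb i j c hc hij)
    have k1 := key 1 (by simp)
    have k2 := key (-1) (by simp)
    rw [abs_le] at k1 k2
    rcases (abs_eq (zero_le_one)).1 (hp i) with h | h <;> rw [h] at k1 k2 <;> linarith
  have hinj : Function.Injective p := by
    intro i j hij
    by_contra hne
    have h2 := hp0 i j hne
    rw [hij] at h2
    have h3 := hp j
    rw [h2] at h3
    simp at h3
  have hN : 0 < ⌊θ⁻¹⌋₊ := by
    rw [Nat.floor_pos]
    exact (one_le_inv₀ h0).2 (by linarith)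
  obtain ⟨hsurj, hfix⟩ := perm_of_bound p hinj _ hN
    (index_bound h0 h1 hX U hU a ha p hp hp0 hinj)
  refine ⟨fun i => a i (p i), Equiv.ofBijective p ⟨hinj, hsurj⟩, ?_, ?_, ?_⟩
  · intro i
    exact (abs_eq zero_le_one).1 (hp i)
  · intro i hi
    exact hfix i hi
  · intro i
    apply (ha i).unique
    apply hasSum_single
    intro k hk
    obtain ⟨j, rfl⟩ := hsurj k
    rw [hp0 j i, zero_smul]
    rintro rfl
    exact hk rfl

lemma backward (h0 : 0 < θ) (h1 : θ ≤ 1/2) (hX : IsTsirelsonSpace θ 1 X e) (U : X →L[ℝ] X)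
    (ε : ℕ+ → ℝ) (π : Equiv.Perm ℕ+) (hε : ∀ i, ε i = 1 ∨ ε i = -1)
    (hπ : ∀ i : ℕ+, ⌊θ⁻¹⌋₊ < (i : ℕ) → π i = i)
    (hUe : ∀ i : ℕ+, U (e i) = ε i • e (π i)) : ∀ x, ‖U x‖ = ‖x‖ := by
  classical
  intro x
  refine hX.dense_embed.induction_on (p := fun x => ‖U x‖ = ‖x‖) x ?_ ?_
  · exact isClosed_eq (by fun_prop) (by fun_prop)
  intro a
  rw [hX.norm_embed]
  have habs : ∀ i, |ε i| = 1 := fun i => (abs_eq zero_le_one).2 (hε i)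
  set c : ℕ+ → ℝ := fun k => ε (π.symm k) * a (π.symm k) with hc
  have e1 : U (a.sum fun i c => c • e i) = ∑ k ∈ a.support.image π, c k • e k := by
    rw [Finset.sum_image (fun x _ y _ h => π.injective h), Finsupp.sum, map_sum]
    apply Finset.sum_congr rfl
    intro i _
    rw [map_smul, hUe, smul_smul, hc]
    simp [mul_comm]
  rw [e1, norm_tsOn hX]
  have hval : ∀ i, |tsOn (a.support.image π) c (π i)| = |a i| := by
    intro i
    rw [tsOn_apply]
    by_cases hi : a i = 0
    · simp [hc, hi]
    · rw [if_pos (Finset.mem_image_of_mem _ (Finsupp.mem_support_iff.2 hi)), hc]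
      simp [abs_mul, habs]
  apply le_antisymm
  · exact perm_le h0 h1 π hπ hval
  · apply perm_le h0 h1 π.symm
    · intro i hi
      rw [Equiv.symm_apply_eq, hπ i hi]
    · intro i
      rw [← hval]; simp

end X

end TsHelpers

/-- A (bounded) linear map on `T[θ, S₁]` is an isometry if and only if
it maps `e_i` to `ε_i e_{π i}`, where `π` is a permutation of `{1, …, ⌊θ⁻¹⌋}`
(fixing all larger indices). -/
theorem tsirelson_linearIsometry_iff
    (θ : ℝ) (hθ0 : 0 < θ) (hθ : θ ≤ 1 / 2)
    (X : Type*) [NormedAddCommGroup X] [NormedSpace ℝ X] (e : ℕ+ → X)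
    (hX : IsTsirelsonSpace θ 1 X e) (U : X →L[ℝ] X) :
    (∀ x : X, ‖U x‖ = ‖x‖) ↔
      ∃ (ε : ℕ+ → ℝ) (π : Equiv.Perm ℕ+),
        (∀ i, ε i = 1 ∨ ε i = -1) ∧
        (∀ i : ℕ+, ⌊θ⁻¹⌋₊ < (i : ℕ) → π i = i) ∧
        (∀ i : ℕ+, U (e i) = ε i • e (π i)) := by
    exact ⟨forward hθ0 hθ hX U, fun ⟨ε, π, h1, h2, h3⟩ => backward hθ0 hθ hX U ε π h1 h2 h3⟩
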